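/- arXiv:2304.01626 — 2 statements merged into one kernel-verified Lean document; each statement's English description precedes it below -/
import Mathlib

section
/- Let F be a finite field with q elements, V = F⁷ with coordinates indexed 0,…,6, and Q the quadratic form Q(x) = x₀x₄ + x₁x₅ + x₂x₆ − x₃² on V. For every singular point P (a 1-dimensional subspace of V on which Q vanishes), the number of moving lines containing P is exactly (q + 1)q². -/
variable {F : Type} [Field F]

/-- The quadratic form `Q(x) = x₀x₄ + x₁x₅ + x₂x₆ − x₃²` on `F⁷`. -/
def quadForm (x : Fin 7 → F) : F :=
  x 0 * x 4 + x 1 * x 5 + x 2 * x 6 - x 3 ^ 2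

/-- A singular point: a 1-dimensional subspace of `F⁷` on which `Q` vanishes. -/
def SingularPoint (W : Submodule F (Fin 7 → F)) : Prop :=
  Module.finrank F W = 1 ∧ ∀ x ∈ W, quadForm x = 0

/-- A totally singular line: a 2-dimensional subspace of `F⁷` on which `Q` vanishes. -/
def TotallySingularLine (W : Submodule F (Fin 7 → F)) : Prop :=
  Module.finrank F W = 2 ∧ ∀ x ∈ W, quadForm x = 0

/-- Grassmann coordinate `m_{ij} = u_i v_j − u_j v_i` of the pair `(u, v)`. -/
def grass (u v : Fin 7 → F) (i j : Fin 7) : F := u i * v j - u j * v i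

/-- The hexagon equations for a pair of vectors `(u, v)`. -/
def HexEq (u v : Fin 7 → F) : Prop :=
  grass u v 1 2 = grass u v 3 4 ∧ grass u v 5 4 = grass u v 3 2 ∧
  grass u v 2 0 = grass u v 3 5 ∧ grass u v 6 5 = grass u v 3 0 ∧
  grass u v 0 1 = grass u v 3 6 ∧ grass u v 4 6 = grass u v 3 1

/-- A subspace satisfies the hexagon equations if every pair of its vectors does
(for a 2-dimensional subspace this is independent of the choice of basis). -/
def SatisfiesHexEq (W : Submodule F (Fin 7 → F)) : Prop :=
  ∀ u ∈ W, ∀ v ∈ W, HexEq u v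

/-- An absolute line: a totally singular line satisfying the hexagon equations. -/
def AbsoluteLine (W : Submodule F (Fin 7 → F)) : Prop :=
  TotallySingularLine W ∧ SatisfiesHexEq W

/-- A moving line: a totally singular line not satisfying the hexagon equations. -/
def MovingLine (W : Submodule F (Fin 7 → F)) : Prop :=
  TotallySingularLine W ∧ ¬ SatisfiesHexEq W

/-- The polar form of `quadForm`. -/
def polB (u v : Fin 7 → F) : F :=
  u 0 * v 4 + u 4 * v 0 + u 1 * v 5 + u 5 * v 1 + u 2 * v 6 + u 6 * v 2 - 2 * u 3 * v 3

/-- Vectors spanning with `u` a moving line. -/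
def movSet (u : Fin 7 → F) : Set (Fin 7 → F) :=
  {v | quadForm v = 0 ∧ polB u v = 0 ∧ ¬ HexEq u v}

/-- Cyclic symmetry. -/
def cyc (x : Fin 7 → F) : Fin 7 → F := ![x 1, x 2, x 0, x 3, x 5, x 6, x 4]

/-- Duality symmetry. -/
def swp (x : Fin 7 → F) : Fin 7 → F := ![x 4, x 5, x 6, -x 3, x 0, x 1, x 2]

theorem cyc_cyc_cyc (x : Fin 7 → F) : cyc (cyc (cyc x)) = x := by
  funext i; fin_cases i <;> rfl

theorem swp_swp (x : Fin 7 → F) : swp (swp x) = x := by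
  funext i; fin_cases i <;> simp [swp]

theorem movSet_cyc (u : Fin 7 → F) : cyc ⁻¹' movSet (cyc u) = movSet u := by
  ext v
  have h1 : quadForm (cyc v) = quadForm v := by simp [quadForm, cyc]; ring
  have h2 : polB (cyc u) (cyc v) = polB u v := by simp [polB, cyc]; ring
  have h3 : HexEq (cyc u) (cyc v) ↔ HexEq u v := by
    simp [HexEq, grass, cyc]; tauto
  simp only [movSet, Set.mem_preimage, Set.mem_setOf_eq, h1, h2, h3]

theorem movSet_swp (u : Fin 7 → F) : swp ⁻¹' movSet (swp u) = movSet u := by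
  ext v
  have h1 : quadForm (swp v) = quadForm v := by simp [quadForm, swp]; ring
  have h2 : polB (swp u) (swp v) = polB u v := by simp [polB, swp]; ring
  have h3 : HexEq (swp u) (swp v) ↔ HexEq u v := by
    simp only [HexEq, grass, swp, Matrix.cons_val]
    constructor
    · rintro ⟨h1, h2, h3, h4, h5, h6⟩
      refine ⟨?_, ?_, ?_, ?_, ?_, ?_⟩
      · linear_combination -h4
      · linear_combination -h5
      · linear_combination -h6
      · linear_combination -h1
      · linear_combination -h2
      · linear_combination -h3
    · rintro ⟨h1, h2, h3, h4, h5, h6⟩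
      refine ⟨?_, ?_, ?_, ?_, ?_, ?_⟩
      · linear_combination -h4
      · linear_combination -h5
      · linear_combination -h6
      · linear_combination -h1
      · linear_combination -h2
      · linear_combination -h3
  simp only [movSet, Set.mem_preimage, Set.mem_setOf_eq, h1, h2, h3]

theorem ncard_cyc (u : Fin 7 → F) : (movSet (cyc u)).ncard = (movSet u).ncard := by
  rw [← movSet_cyc u]
  refine (Set.ncard_preimage_of_injective_subset_range ?_ ?_).symm
  · intro a b h
    rw [← cyc_cyc_cyc a, ← cyc_cyc_cyc b, h]
  · intro a _
    exact ⟨_, cyc_cyc_cyc a⟩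

theorem ncard_swp (u : Fin 7 → F) : (movSet (swp u)).ncard = (movSet u).ncard := by
  rw [← movSet_swp u]
  refine (Set.ncard_preimage_of_injective_subset_range ?_ ?_).symm
  · intro a b h
    rw [← swp_swp a, ← swp_swp b, h]
  · intro a _
    exact ⟨_, swp_swp a⟩

theorem quad_cyc (v : Fin 7 → F) : quadForm (cyc v) = quadForm v := by
  simp [quadForm, cyc]; ring

theorem quad_swp (v : Fin 7 → F) : quadForm (swp v) = quadForm v := by
  simp [quadForm, swp]; ring

theorem movSet_smul (u : Fin 7 → F) (c : F) (hc : c ≠ 0) : movSet (c • u) = movSet u := by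
  ext v
  have h2 : polB (c • u) v = c * polB u v := by simp [polB]; ring
  have h3 : HexEq (c • u) v ↔ HexEq u v := by
    have hg : ∀ i j, grass (c • u) v i j = c * grass u v i j := by
      intro i j; simp [grass]; ring
    simp only [HexEq, hg, mul_right_inj' hc]
  simp only [movSet, Set.mem_setOf_eq, h2, h3, mul_eq_zero, hc, false_or]

/-- parameters -/
abbrev ParT (F : Type) [Field F] : Type :=
  {t : F × F × F × F × F // t.1 * t.2.2.2.1 + t.2.1 * t.2.2.2.2 = t.2.2.1 ^ 2 ∧
    ¬ (t.1 = 0 ∧ t.2.1 = 0)}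

/-- split of the parameter set -/
def parEquiv (F : Type) [Field F] [DecidableEq F] :
    ParT F ≃ (Fˣ × F × F × F) ⊕ (Fˣ × F × F) where
  toFun t := if h : t.1.1 = 0 then
      Sum.inr (Units.mk0 t.1.2.1 (fun h' => t.2.2 ⟨h, h'⟩), t.1.2.2.1, t.1.2.2.2.1)
    else Sum.inl (Units.mk0 t.1.1 h, t.1.2.1, t.1.2.2.1, t.1.2.2.2.2)
  invFun s := match s with
    | Sum.inl (a, b, c, e) => ⟨((a : F), b, c, (c ^ 2 - b * e) * (a : F)⁻¹, e), by
        have := a.ne_zero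
        constructor
        · field_simp; ring
        · simp⟩
    | Sum.inr (b, c, d) => ⟨(0, (b : F), c, d, c ^ 2 * (b : F)⁻¹), by
        have := b.ne_zero
        constructor
        · field_simp; ring
        · simp⟩
  left_inv := by
    rintro ⟨⟨a, b, c, d, e⟩, h1, h2⟩
    by_cases h : a = 0
    · subst h
      have hb : b ≠ 0 := fun h' => h2 ⟨rfl, h'⟩
      simp at h1
      simp [← h1, hb]
      field_simp
    · simp only at h1
      simp [h, ← h1]
      field_simp
  right_inv := by
    rintro (⟨a, b, c, e⟩ | ⟨b, c, d⟩) <;> simp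

theorem card_ParT (F : Type) [Field F] [Fintype F] :
    Nat.card (ParT F) = (Fintype.card F - 1) * (Fintype.card F ^ 3 + Fintype.card F ^ 2) := by
  classical
  rw [Nat.card_congr (parEquiv F)]
  simp [Nat.card_sum, Nat.card_prod, Nat.card_eq_fintype_card, Fintype.card_units]
  ring

/-- Inverse parametrization. -/
def parVec (u : Fin 7 → F) (s : F × F × F × F × F × F) : Fin 7 → F :=
  let v0 := s.1
  let b1 := s.2.1
  let b2 := s.2.2.1
  let b3 := s.2.2.2.1
  let x := s.2.2.2.2.1
  let y := s.2.2.2.2.2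
  let w3 := b3 + (u 5 * y - u 6 * x)
  let w1 := b1 - u 6 * b3 + (u 3 * y - u 6 * w3)
  let w2 := b2 + u 5 * b3 - (u 3 * x - u 5 * w3)
  ![v0, w1 + v0 * u 1, w2 + v0 * u 2, w3 + v0 * u 3,
    -(u 1 * x + u 5 * w1 + u 2 * y + u 6 * w2 - 2 * u 3 * w3) + v0 * u 4,
    x + v0 * u 5, y + v0 * u 6]

/-- Forward parametrization. -/
def vecPar (u v : Fin 7 → F) : F × F × F × F × F × F :=
  let x := v 5 - v 0 * u 5
  let y := v 6 - v 0 * u 6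
  let w1 := v 1 - v 0 * u 1
  let w2 := v 2 - v 0 * u 2
  let w3 := v 3 - v 0 * u 3
  let b3 := w3 - (u 5 * y - u 6 * x)
  (v 0, w1 - (u 3 * y - u 6 * w3) + u 6 * b3, w2 + (u 3 * x - u 5 * w3) - u 5 * b3, b3, x, y)

theorem vecPar_parVec (u : Fin 7 → F) (s) : vecPar u (parVec u s) = s := by
  obtain ⟨a, b, c, d, e, f⟩ := s
  simp only [vecPar, parVec, Matrix.cons_val, Prod.mk.injEq]
  refine ⟨trivial, ?_, ?_, ?_, ?_, ?_⟩ <;> ring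

theorem polB_parVec (u : Fin 7 → F) (h0 : u 0 = 1) (hu : quadForm u = 0) (s) :
    polB u (parVec u s) = 0 := by
  obtain ⟨a, b, c, d, e, f⟩ := s
  simp only [quadForm, h0] at hu
  simp only [polB, parVec, Matrix.cons_val, h0]
  linear_combination 2 * a * hu

theorem parVec_vecPar (u v : Fin 7 → F) (h0 : u 0 = 1) (hu : quadForm u = 0)
    (hv : polB u v = 0) : parVec u (vecPar u v) = v := by
  simp only [quadForm, h0] at hu
  simp only [polB, h0] at hv
  funext i
  fin_cases i <;> simp [parVec, vecPar]
  linear_combination - hv + 2 * v 0 * hu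

theorem quad_parVec (u : Fin 7 → F) (h0 : u 0 = 1) (hu : quadForm u = 0) (a b c d e f : F) :
    quadForm (parVec u (a, b, c, d, e, f)) = b * e + c * f - d ^ 2 := by
  simp only [quadForm, h0] at hu
  simp only [quadForm, parVec, Matrix.cons_val]
  linear_combination a ^ 2 * hu

theorem hex_parVec (u : Fin 7 → F) (h0 : u 0 = 1) (hu : quadForm u = 0) (a b c d e f : F)
    (hs : b * e + c * f = d ^ 2) :
    HexEq u (parVec u (a, b, c, d, e, f)) ↔ b = 0 ∧ c = 0 := by
  simp only [quadForm, h0] at hu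
  simp only [HexEq, grass, parVec, Matrix.cons_val, h0]
  constructor
  · rintro ⟨h1, h2, h3, h4, h5, h6⟩
    have hd : d = 0 := by linear_combination h4
    subst hd
    exact ⟨by linear_combination h5, by linear_combination -h3⟩
  · rintro ⟨rfl, rfl⟩
    have hd : d = 0 := by
      have : d ^ 2 = 0 := by rw [← hs]; ring
      exact pow_eq_zero_iff (two_ne_zero) |>.1 this
    subst hd
    have h4 : u 4 = u 3 ^ 2 - u 1 * u 5 - u 2 * u 6 := by linear_combination hu
    rw [h4]
    refine ⟨?_, ?_, ?_, ?_, ?_, ?_⟩ <;> ring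

theorem card_one [Fintype F] (u : Fin 7 → F) (h0 : u 0 = 1) (hu : quadForm u = 0) :
    (movSet u).ncard = Fintype.card F *
      ((Fintype.card F - 1) * (Fintype.card F ^ 3 + Fintype.card F ^ 2)) := by
  rw [← card_ParT, ← Nat.card_eq_fintype_card (α := F), ← Nat.card_prod, ← Nat.card_coe_set_eq]
  symm
  refine Nat.card_congr ⟨fun s => ⟨parVec u (s.1, s.2.1), ?_⟩,
    fun v => ((vecPar u v.1).1, ⟨(vecPar u v.1).2, ?_⟩), ?_, ?_⟩
  · obtain ⟨a, ⟨⟨b, c, d, e, f⟩, h1, h2⟩⟩ := s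
    simp only at h1 h2
    refine ⟨?_, polB_parVec u h0 hu _, ?_⟩
    · rw [quad_parVec u h0 hu, h1]; ring
    · rw [hex_parVec u h0 hu _ _ _ _ _ _ h1]; exact h2
  · obtain ⟨v, h1, h2, h3⟩ := v
    have hv := parVec_vecPar u v h0 hu h2
    revert hv
    generalize vecPar u v = s
    obtain ⟨a, b, c, d, e, f⟩ := s
    rintro rfl
    rw [quad_parVec u h0 hu] at h1
    have h1' : b * e + c * f = d ^ 2 := by linear_combination h1
    rw [hex_parVec u h0 hu _ _ _ _ _ _ h1'] at h3
    exact ⟨h1', h3⟩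
  · rintro ⟨a, t, ht⟩
    simp only [vecPar_parVec]
  · rintro ⟨v, h1, h2, h3⟩
    exact Subtype.ext (parVec_vecPar u v h0 hu h2)

theorem quad_smul (c : F) (u : Fin 7 → F) : quadForm (c • u) = c ^ 2 * quadForm u := by
  simp [quadForm]; ring

theorem card_zero [Fintype F] (u : Fin 7 → F) (h0 : u 0 ≠ 0) (hu : quadForm u = 0) :
    (movSet u).ncard = Fintype.card F *
      ((Fintype.card F - 1) * (Fintype.card F ^ 3 + Fintype.card F ^ 2)) := by
  rw [← movSet_smul u (u 0)⁻¹ (inv_ne_zero h0)]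
  apply card_one
  · simp [h0]
  · rw [quad_smul, hu, mul_zero]

theorem card_low [Fintype F] (u : Fin 7 → F) (h : u 0 ≠ 0 ∨ u 1 ≠ 0 ∨ u 2 ≠ 0)
    (hu : quadForm u = 0) :
    (movSet u).ncard = Fintype.card F *
      ((Fintype.card F - 1) * (Fintype.card F ^ 3 + Fintype.card F ^ 2)) := by
  rcases h with h | h | h
  · exact card_zero u h hu
  · rw [← ncard_cyc]
    exact card_zero _ h (by rw [quad_cyc, hu])
  · rw [← ncard_cyc, ← ncard_cyc]
    exact card_zero _ h (by rw [quad_cyc, quad_cyc, hu])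

theorem card_movSet [Fintype F] (u : Fin 7 → F) (h : u ≠ 0) (hu : quadForm u = 0) :
    (movSet u).ncard = Fintype.card F *
      ((Fintype.card F - 1) * (Fintype.card F ^ 3 + Fintype.card F ^ 2)) := by
  by_cases h1 : u 0 ≠ 0 ∨ u 1 ≠ 0 ∨ u 2 ≠ 0
  · exact card_low u h1 hu
  by_cases h2 : u 4 ≠ 0 ∨ u 5 ≠ 0 ∨ u 6 ≠ 0
  · rw [← ncard_swp]
    exact card_low _ h2 (by rw [quad_swp, hu])
  push Not at h1 h2
  obtain ⟨a0, a1, a2⟩ := h1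
  obtain ⟨a4, a5, a6⟩ := h2
  have a3 : u 3 = 0 := by simpa [quadForm, a0, a1, a2] using hu
  exact absurd (by funext i; fin_cases i <;> assumption) h

theorem quad_lin (u v : Fin 7 → F) (a b : F) :
    quadForm (a • u + b • v) = a ^ 2 * quadForm u + b ^ 2 * quadForm v + a * b * polB u v := by
  simp [quadForm, polB]; ring

theorem hex_lin (u v : Fin 7 → F) (a b c d : F) (h : HexEq u v) :
    HexEq (a • u + b • v) (c • u + d • v) := by
  have hg : ∀ i j, grass (a • u + b • v) (c • u + d • v) i j = (a * d - b * c) * grass u v i j := by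
    intro i j; simp [grass]; ring
  obtain ⟨h1, h2, h3, h4, h5, h6⟩ := h
  simp only [HexEq, hg]
  exact ⟨by rw [h1], by rw [h2], by rw [h3], by rw [h4], by rw [h5], by rw [h6]⟩

theorem hex_smul (u : Fin 7 → F) (c : F) : HexEq u (c • u) := by
  have hg : ∀ i j, grass u (c • u) i j = 0 := by
    intro i j; simp [grass]; ring
  simp [HexEq, hg]

theorem span_eq_of (u v : Fin 7 → F) (W : Submodule F (Fin 7 → F)) (hu : u ∈ W) (hv : v ∈ W)
    (h0 : u ≠ 0) (hW : Module.finrank F W = 2) (hvu : v ∉ Submodule.span F {u}) :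
    Submodule.span F {u, v} = W := by
  have hli : LinearIndependent F ![u, v] := by
    rw [LinearIndependent.pair_iff' h0]
    intro a ha
    exact hvu (Submodule.mem_span_singleton.2 ⟨a, ha⟩)
  apply Submodule.eq_of_le_of_finrank_eq
  · rw [Submodule.span_le]
    rintro x (rfl | rfl) <;> assumption
  · rw [hW]
    have := finrank_span_eq_card hli
    rw [Matrix.range_cons_cons_empty] at this
    simpa using this

/-- Membership criterion for the moving set. -/
theorem mem_movSet_iff (u v : Fin 7 → F) (W : Submodule F (Fin 7 → F)) (hu : u ∈ W)
    (h0 : u ≠ 0) (hW : MovingLine W) (hv : v ∈ W) :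
    v ∈ movSet u ↔ v ∉ Submodule.span F {u} := by
  obtain ⟨⟨hr, hq⟩, hH⟩ := hW
  constructor
  · rintro ⟨-, -, h⟩ hs
    obtain ⟨c, rfl⟩ := Submodule.mem_span_singleton.1 hs
    exact h (hex_smul u c)
  · intro hs
    refine ⟨hq v hv, ?_, ?_⟩
    · have := quad_lin u v 1 1
      rw [hq _ (W.add_mem (W.smul_mem _ hu) (W.smul_mem _ hv)), hq u hu, hq v hv] at this
      linear_combination -this
    · intro hh
      apply hH
      have hsp := span_eq_of u v W hu hv h0 hr hs
      intro x hx y hy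
      rw [← hsp] at hx hy
      obtain ⟨a, b, rfl⟩ := Submodule.mem_span_pair.1 hx
      obtain ⟨c, d, rfl⟩ := Submodule.mem_span_pair.1 hy
      exact hex_lin u v a b c d hh

theorem moving_span (u v : Fin 7 → F) (h0 : u ≠ 0) (hu : quadForm u = 0) (hv : v ∈ movSet u) :
    MovingLine (Submodule.span F {u, v}) := by
  obtain ⟨h1, h2, h3⟩ := hv
  have hli : LinearIndependent F ![u, v] := by
    rw [LinearIndependent.pair_iff' h0]
    rintro a rfl
    exact h3 (hex_smul u a)
  refine ⟨⟨?_, ?_⟩, ?_⟩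
  · have := finrank_span_eq_card hli
    rw [Matrix.range_cons_cons_empty] at this
    simpa using this
  · intro x hx
    obtain ⟨a, b, rfl⟩ := Submodule.mem_span_pair.1 hx
    rw [quad_lin, h1, h2, hu]; ring
  · intro h
    exact h3 (h u (Submodule.subset_span (by simp)) v (Submodule.subset_span (by simp)))

/-- Over a finite field with `q` elements, every singular point of the
quadratic form `Q(x) = x₀x₄ + x₁x₅ + x₂x₆ − x₃²` on `F⁷` is contained in exactly
`(q+1)q²` moving lines. -/
theorem stmt_8 (q : ℕ) (F : Type) [Field F] [Fintype F] (hq : Fintype.card F = q)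
    (P : Submodule F (Fin 7 → F)) (hP : SingularPoint P) :
    {W : Submodule F (Fin 7 → F) | MovingLine W ∧ P ≤ W}.ncard = (q + 1) * q ^ 2 := by
  classical
  obtain ⟨hP1, hPq⟩ := hP
  obtain ⟨⟨u, huP⟩, hu0, hspan⟩ := finrank_eq_one_iff'.1 hP1
  have h0 : u ≠ 0 := fun h => hu0 (Subtype.ext h)
  have hPs : P = Submodule.span F {u} := by
    apply le_antisymm
    · intro x hx
      obtain ⟨c, hc⟩ := hspan ⟨x, hx⟩
      exact Submodule.mem_span_singleton.2 ⟨c, congrArg Subtype.val hc⟩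
    · rw [Submodule.span_le]; rintro x rfl; exact huP
  have hu : quadForm u = 0 := hPq u huP
  have hcard := card_movSet u h0 hu
  rw [hq] at hcard
  have hq2 : 1 < q := hq ▸ Fintype.one_lt_card
  set L := {W : Submodule F (Fin 7 → F) | MovingLine W ∧ P ≤ W} with hL
  have hLf : L.Finite := Set.toFinite _
  have hSf : (movSet u).Finite := Set.toFinite _
  have hmaps : ∀ v ∈ hSf.toFinset, Submodule.span F {u, v} ∈ hLf.toFinset := by
    intro v hv
    rw [Set.Finite.mem_toFinset] at hv ⊢
    refine ⟨moving_span u v h0 hu hv, ?_⟩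
    rw [hPs]
    exact Submodule.span_mono (by simp)
  have hfib : ∀ W ∈ hLf.toFinset,
      (hSf.toFinset.filter (fun v => Submodule.span F {u, v} = W)).card = q ^ 2 - q := by
    intro W hW
    rw [Set.Finite.mem_toFinset] at hW
    obtain ⟨hM, hPW⟩ := hW
    have hEq : ((hSf.toFinset.filter (fun v => Submodule.span F {u, v} = W) : Finset _) :
        Set (Fin 7 → F)) = (W : Set (Fin 7 → F)) \ (P : Set (Fin 7 → F)) := by
      ext v
      simp only [Finset.coe_filter, Set.Finite.mem_toFinset, Set.mem_setOf_eq, Set.mem_diff,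
        SetLike.mem_coe]
      constructor
      · rintro ⟨hv, rfl⟩
        have hvW : v ∈ Submodule.span F {u, v} := Submodule.subset_span (by simp)
        refine ⟨hvW, ?_⟩
        rw [hPs]
        exact (mem_movSet_iff u v _ (hPW huP) h0 hM hvW).1 hv
      · rintro ⟨hvW, hvP⟩
        rw [hPs] at hvP
        exact ⟨(mem_movSet_iff u v _ (hPW huP) h0 hM hvW).2 hvP,
          span_eq_of u v W (hPW huP) hvW h0 hM.1.1 hvP⟩
    have hc : ∀ U : Submodule F (Fin 7 → F),
        (U : Set (Fin 7 → F)).ncard = q ^ Module.finrank F U := by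
      intro U
      rw [← Nat.card_coe_set_eq, ← hq, ← Nat.card_eq_fintype_card]
      exact Module.natCard_eq_pow_finrank
    rw [← Set.ncard_coe_finset, hEq, Set.ncard_diff hPW (Set.toFinite _), hc, hc, hM.1.1, hP1,
      pow_one]
  have key := Finset.card_eq_sum_card_fiberwise hmaps
  rw [Finset.sum_congr rfl hfib, Finset.sum_const, smul_eq_mul,
    ← Set.ncard_eq_toFinset_card _ hSf, ← Set.ncard_eq_toFinset_card _ hLf, hcard] at key
  obtain ⟨r, rfl⟩ : ∃ r, q = r + 2 := ⟨q - 2, by omega⟩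
  have e1 : (r + 2) ^ 2 - (r + 2) = (r + 2) * (r + 1) := by
    rw [Nat.sub_eq_iff_eq_add (by nlinarith)]; ring
  rw [e1] at key
  have e2 : r + 2 - 1 = r + 1 := by omega
  rw [e2] at key
  have hpos : 0 < (r + 2) * (r + 1) := by positivity
  apply Nat.eq_of_mul_eq_mul_right hpos
  rw [← key]; ring
end

section
/- Let F be a finite field with q elements, V = F⁷ with coordinates indexed 0,…,6, and Q the quadratic form Q(x) = x₀x₄ + x₁x₅ + x₂x₆ − x₃² on V. Then the number of moving lines equals (q⁴ + q² + 1)(q + 1)q². -/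
variable {F : Type} [Field F]

open Classical in
theorem card_split {α : Type} [Finite α] (P R : α → Prop) :
    Nat.card {x // P x} = Nat.card {x // P x ∧ R x} + Nat.card {x // P x ∧ ¬ R x} := by
  haveI := Fintype.ofFinite α
  simp only [Nat.card_eq_fintype_card, Fintype.card_subtype]
  rw [← Finset.filter_filter, ← Finset.filter_filter, Finset.card_filter_add_card_filter_not]

theorem card_hyp {F : Type} [Field F] [Fintype F] {Y : Type} [Fintype Y] (f : Y → F) :
    Nat.card {p : (F × F) × Y // p.1.1 * p.1.2 + f p.2 = 0} =
      Nat.card F * Nat.card {y // f y = 0} + (Nat.card F - 1) * Nat.card Y := by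
  rw [card_split _ (fun p => p.1.1 = 0)]
  congr 1
  · rw [← Nat.card_prod]
    refine Nat.card_congr
      { toFun := fun p => (p.1.1.2, ⟨p.1.2, by
          have h := p.2.1; have h2 := p.2.2; rw [h2] at h; simpa using h⟩)
        invFun := fun p => ⟨((0, p.1), p.2.1), by simpa using p.2.2, rfl⟩
        left_inv := ?_
        right_inv := ?_ }
    · rintro ⟨⟨⟨a, b⟩, y⟩, h1, h2⟩
      simp only at h2
      subst h2
      rfl
    · rintro ⟨a, y⟩
      rfl
  · have : Nat.card {a : F // a ≠ 0} = Nat.card F - 1 := by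
      classical
      simp [Nat.card_eq_fintype_card, Fintype.card_subtype_compl]
    rw [← this, ← Nat.card_prod]
    refine Nat.card_congr
      { toFun := fun p => (⟨p.1.1.1, p.2.2⟩, p.1.2)
        invFun := fun p => ⟨((p.1.1, - f p.2 / p.1.1), p.2), by
          have := p.1.2
          field_simp
          simp, p.1.2⟩
        left_inv := ?_
        right_inv := ?_ }
    · rintro ⟨⟨⟨a, b⟩, y⟩, h1, h2⟩
      simp only at h1 h2
      simp only [Subtype.mk.injEq, Prod.mk.injEq, true_and, and_true]
      field_simp
      linear_combination -h1
    · rintro ⟨a, y⟩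
      rfl

theorem arith_step (q k : ℕ) (hq : 0 < q) : q * q ^ k + (q - 1) * q ^ (k + 1) = q ^ (k + 2) := by
  obtain ⟨n, rfl⟩ : ∃ n, q = n + 1 := ⟨q - 1, by omega⟩
  simp only [Nat.add_sub_cancel]
  ring

theorem card_conic1 {F : Type} [Field F] [Fintype F] :
    Nat.card {e : F // - e ^ 2 = 0} = 1 := by
  simp

theorem card_conic3 {F : Type} [Field F] [Fintype F] :
    Nat.card {p : (F × F) × F // p.1.1 * p.1.2 + - p.2 ^ 2 = 0} = Nat.card F ^ 2 := by
  rw [card_hyp (fun e : F => - e ^ 2), card_conic1]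
  simpa using arith_step (Nat.card F) 0 Nat.card_pos

theorem card_conic5 {F : Type} [Field F] [Fintype F] :
    Nat.card {p : (F × F) × (F × F) × F // p.1.1 * p.1.2 +
      (p.2.1.1 * p.2.1.2 + - p.2.2 ^ 2) = 0} = Nat.card F ^ 4 := by
  rw [card_hyp (fun p : (F × F) × F => p.1.1 * p.1.2 + - p.2 ^ 2), card_conic3,
    ← arith_step (Nat.card F) 2 Nat.card_pos]
  simp only [Nat.card_prod]
  ring

theorem card_conic7 {F : Type} [Field F] [Fintype F] :
    Nat.card {p : (F × F) × (F × F) × (F × F) × F // p.1.1 * p.1.2 +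
      (p.2.1.1 * p.2.1.2 + (p.2.2.1.1 * p.2.2.1.2 + - p.2.2.2 ^ 2)) = 0} = Nat.card F ^ 6 := by
  rw [card_hyp (fun p : (F × F) × (F × F) × F => p.1.1 * p.1.2 +
      (p.2.1.1 * p.2.1.2 + - p.2.2 ^ 2)), card_conic5,
    ← arith_step (Nat.card F) 4 Nat.card_pos]
  simp only [Nat.card_prod]
  ring

theorem card_quadric {F : Type} [Field F] [Fintype F] :
    Nat.card {x : Fin 7 → F // quadForm x = 0} = Nat.card F ^ 6 := by
  rw [← card_conic7]
  refine Nat.card_congr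
    { toFun := fun x => ⟨((x.1 0, x.1 4), (x.1 1, x.1 5), (x.1 2, x.1 6), x.1 3), by
        have := x.2
        simp only [quadForm] at this
        linear_combination this⟩
      invFun := fun p => ⟨![p.1.1.1, p.1.2.1.1, p.1.2.2.1.1, p.1.2.2.2, p.1.1.2, p.1.2.1.2,
          p.1.2.2.1.2], by
        have := p.2
        simp [quadForm]
        linear_combination this⟩
      left_inv := ?_
      right_inv := ?_ }
  · rintro ⟨x, hx⟩
    apply Subtype.ext
    funext i
    fin_cases i <;> rfl
  · rintro ⟨⟨⟨a, b⟩, ⟨c, d⟩, ⟨e, f⟩, g⟩, h⟩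
    rfl

/-- The polar form of `quadForm`. -/
def polarB {F : Type} [Field F] (u v : Fin 7 → F) : F :=
  u 0 * v 4 + u 4 * v 0 + u 1 * v 5 + u 5 * v 1 + u 2 * v 6 + u 6 * v 2 - 2 * (u 3 * v 3)

theorem quadForm_comb {F : Type} [Field F] (u v : Fin 7 → F) (a b : F) :
    quadForm (a • u + b • v) = a ^ 2 * quadForm u + a * b * polarB u v + b ^ 2 * quadForm v := by
  simp [quadForm, polarB]
  ring

theorem grass_comb {F : Type} [Field F] (u v : Fin 7 → F) (a b c d : F) (i j : Fin 7) :
    grass (a • u + b • v) (c • u + d • v) i j = (a * d - b * c) * grass u v i j := by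
  simp [grass]
  ring

theorem hexEq_comb {F : Type} [Field F] (u v : Fin 7 → F) (a b c d : F) (h : HexEq u v) :
    HexEq (a • u + b • v) (c • u + d • v) := by
  simp only [HexEq, grass_comb] at *
  obtain ⟨h1, h2, h3, h4, h5, h6⟩ := h
  rw [h1, h2, h3, h4, h5, h6]
  simp

/-- The two counts attached to a point. -/
def Counts {F : Type} [Field F] (u : Fin 7 → F) : Prop :=
  Nat.card {v // quadForm v = 0 ∧ polarB u v = 0} = Nat.card F ^ 5 ∧
  Nat.card {v // (quadForm v = 0 ∧ polarB u v = 0) ∧ HexEq u v} = Nat.card F ^ 3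

theorem counts_one {F : Type} [Field F] [Fintype F] (u : Fin 7 → F) (hu : quadForm u = 0)
    (h0 : u 0 = 1) : Counts u := by
  have hu4 : u 4 = u 3 ^ 2 - u 1 * u 5 - u 2 * u 6 := by
    simp only [quadForm, h0] at hu
    linear_combination hu
  constructor
  · rw [pow_succ', ← card_conic5, ← Nat.card_prod]
    refine Nat.card_congr
      { toFun := fun v => (v.1 0, ⟨((v.1 1 - v.1 0 * u 1, v.1 5 - v.1 0 * u 5),
          (v.1 2 - v.1 0 * u 2, v.1 6 - v.1 0 * u 6), v.1 3 - v.1 0 * u 3), by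
            obtain ⟨v, h1, h2⟩ := v
            simp only [quadForm, polarB, h0, hu4] at h1 h2 ⊢
            linear_combination h1 - v 0 * h2⟩)
        invFun := fun p => ⟨![p.1, p.1 * u 1 + p.2.1.1.1, p.1 * u 2 + p.2.1.2.1.1,
            p.1 * u 3 + p.2.1.2.2, p.1 * u 4 - (u 1 * p.2.1.1.2 + u 5 * p.2.1.1.1
              + u 2 * p.2.1.2.1.2 + u 6 * p.2.1.2.1.1 - 2 * u 3 * p.2.1.2.2),
            p.1 * u 5 + p.2.1.1.2, p.1 * u 6 + p.2.1.2.1.2], by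
            obtain ⟨t, ⟨⟨⟨a, b⟩, ⟨c, d⟩, e⟩, h⟩⟩ := p
            simp [quadForm, polarB, h0, hu4] at h ⊢
            constructor
            · linear_combination h
            · ring⟩
        left_inv := ?_
        right_inv := ?_ }
    · rintro ⟨v, h1, h2⟩
      apply Subtype.ext
      funext i
      simp only [polarB, h0] at h2
      fin_cases i <;> simp
      rw [hu4] at *
      linear_combination -h2
    · rintro ⟨t, ⟨⟨⟨a, b⟩, ⟨c, d⟩, e⟩, h⟩⟩
      simp
  · rw [pow_succ, pow_two, ← Nat.card_prod, ← Nat.card_prod]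
    refine Nat.card_congr
      { toFun := fun v => ((v.1 0, v.1 5 - v.1 0 * u 5), v.1 6 - v.1 0 * u 6)
        invFun := fun p =>
          let w3 := - (u 6 * p.1.2 - u 5 * p.2)
          let w1 := u 3 * p.2 - u 6 * w3
          let w2 := - (u 3 * p.1.2 - u 5 * w3)
          ⟨![p.1.1, p.1.1 * u 1 + w1, p.1.1 * u 2 + w2,
            p.1.1 * u 3 + w3, p.1.1 * u 4 - (u 1 * p.1.2 + u 5 * w1
              + u 2 * p.2 + u 6 * w2 - 2 * u 3 * w3),
            p.1.1 * u 5 + p.1.2, p.1.1 * u 6 + p.2], by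
            obtain ⟨⟨t, a⟩, b⟩ := p
            simp [quadForm, polarB, HexEq, grass, h0, hu4]
            refine ⟨⟨?_, ?_⟩, ?_, ?_, ?_, ?_, ?_, ?_⟩ <;> ring⟩
        left_inv := ?_
        right_inv := ?_ }
    · rintro ⟨v, ⟨h1, h2⟩, g1, g2, g3, g4, g5, g6⟩
      apply Subtype.ext
      have e3 : v 3 = v 0 * u 3 - (u 6 * (v 5 - v 0 * u 5) - u 5 * (v 6 - v 0 * u 6)) := by
        simp only [grass, h0] at g4
        linear_combination g4
      have e1 : v 1 = v 0 * u 1 + (u 3 * (v 6 - v 0 * u 6) - u 6 * (v 3 - v 0 * u 3)) := by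
        simp only [grass, h0] at g5
        linear_combination g5
      have e2 : v 2 = v 0 * u 2 - (u 3 * (v 5 - v 0 * u 5) - u 5 * (v 3 - v 0 * u 3)) := by
        simp only [grass, h0] at g3
        linear_combination - g3
      have e4 : v 4 = v 0 * u 4 - (u 1 * (v 5 - v 0 * u 5) + u 5 * (v 1 - v 0 * u 1)
          + u 2 * (v 6 - v 0 * u 6) + u 6 * (v 2 - v 0 * u 2) - 2 * u 3 * (v 3 - v 0 * u 3)) := by
        simp only [polarB, h0, hu4] at h2 ⊢
        linear_combination h2
      funext i
      fin_cases i <;> simp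
      · rw [e1, e3]; ring
      · rw [e2, e3]; ring
      · rw [e3]; ring
      · rw [e4, e1, e2, e3]; ring
    · rintro ⟨⟨t, a⟩, b⟩
      simp

theorem counts_transfer {F : Type} [Field F] (σ : (Fin 7 → F) ≃ (Fin 7 → F)) (u u' : Fin 7 → F)
    (hQ : ∀ v, quadForm (σ v) = 0 ↔ quadForm v = 0)
    (hB : ∀ v, polarB u' (σ v) = 0 ↔ polarB u v = 0)
    (hH : ∀ v, HexEq u' (σ v) ↔ HexEq u v) (h : Counts u') : Counts u := by
  refine ⟨h.1 ▸ Nat.card_congr (σ.subtypeEquiv ?_), h.2 ▸ Nat.card_congr (σ.subtypeEquiv ?_)⟩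
  · intro v; rw [hQ, hB]
  · intro v; rw [hQ, hB, hH]

theorem counts_zero {F : Type} [Field F] [Fintype F] (u : Fin 7 → F) (hu : quadForm u = 0)
    (h0 : u 0 ≠ 0) : Counts u := by
  have hi : (u 0)⁻¹ ≠ 0 := inv_ne_zero h0
  have hg : ∀ v i j, grass ((u 0)⁻¹ • u) v i j = (u 0)⁻¹ * grass u v i j := by
    intro v i j
    simp [grass]; ring
  refine counts_transfer (Equiv.refl _) u ((u 0)⁻¹ • u) (fun v => Iff.rfl) ?_ ?_
    (counts_one _ ?_ ?_)
  · intro v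
    have : polarB ((u 0)⁻¹ • u) v = (u 0)⁻¹ * polarB u v := by
      simp [polarB]; ring
    simp only [Equiv.refl_apply, this, mul_eq_zero, hi, false_or]
  · intro v
    simp only [HexEq, hg, Equiv.refl_apply, mul_right_inj' hi]
  · have := quadForm_comb u 0 (u 0)⁻¹ 0
    simpa [hu] using this
  · simp [h0]

/-- Cyclic coordinate symmetry. -/
def rotE (F : Type) : (Fin 7 → F) ≃ (Fin 7 → F) where
  toFun v := ![v 1, v 2, v 0, v 3, v 5, v 6, v 4]
  invFun v := ![v 2, v 0, v 1, v 3, v 6, v 4, v 5]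
  left_inv v := by funext i; fin_cases i <;> rfl
  right_inv v := by funext i; fin_cases i <;> rfl

/-- The duality coordinate symmetry. -/
def swapE (F : Type) [Field F] : (Fin 7 → F) ≃ (Fin 7 → F) where
  toFun v := ![v 4, v 5, v 6, - v 3, v 0, v 1, v 2]
  invFun v := ![v 4, v 5, v 6, - v 3, v 0, v 1, v 2]
  left_inv v := by funext i; fin_cases i <;> simp
  right_inv v := by funext i; fin_cases i <;> simp

theorem quadForm_rot {F : Type} [Field F] (v : Fin 7 → F) :
    quadForm (rotE F v) = quadForm v := by
  simp [quadForm, rotE]; ring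

theorem quadForm_swap {F : Type} [Field F] (v : Fin 7 → F) :
    quadForm (swapE F v) = quadForm v := by
  simp [quadForm, swapE]; ring

theorem counts_rot {F : Type} [Field F] (u : Fin 7 → F) (h : Counts (rotE F u)) : Counts u := by
  refine counts_transfer (rotE F) u _ (fun v => by rw [quadForm_rot]) (fun v => ?_) (fun v => ?_) h
  · have : polarB (rotE F u) (rotE F v) = polarB u v := by
      simp [polarB, rotE]; ring
    rw [this]
  · simp [HexEq, grass, rotE]
    tauto

theorem counts_swap {F : Type} [Field F] (u : Fin 7 → F) (h : Counts (swapE F u)) : Counts u := by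
  refine counts_transfer (swapE F) u _ (fun v => by rw [quadForm_swap])
    (fun v => ?_) (fun v => ?_) h
  · have : polarB (swapE F u) (swapE F v) = polarB u v := by
      simp [polarB, swapE]; ring
    rw [this]
  · simp [HexEq, grass, swapE]
    constructor
    · rintro ⟨h1, h2, h3, h4, h5, h6⟩
      refine ⟨?_, ?_, ?_, ?_, ?_, ?_⟩
      · linear_combination -h4
      · linear_combination -h5
      · linear_combination -h6
      · linear_combination -h1
      · linear_combination -h2
      · linear_combination -h3
    · rintro ⟨h1, h2, h3, h4, h5, h6⟩
      refine ⟨?_, ?_, ?_, ?_, ?_, ?_⟩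
      · linear_combination -h4
      · linear_combination -h5
      · linear_combination -h6
      · linear_combination -h1
      · linear_combination -h2
      · linear_combination -h3

theorem counts_low {F : Type} [Field F] [Fintype F] (u : Fin 7 → F) (hu : quadForm u = 0)
    (h : u 0 ≠ 0 ∨ u 1 ≠ 0 ∨ u 2 ≠ 0) : Counts u := by
  rcases h with h | h | h
  · exact counts_zero u hu h
  · exact counts_rot _ (counts_zero _ (by rw [quadForm_rot, hu]) h)
  · exact counts_rot _ (counts_rot _ (counts_zero _ (by rw [quadForm_rot, quadForm_rot, hu]) h))

theorem counts_all {F : Type} [Field F] [Fintype F] (u : Fin 7 → F) (hu : quadForm u = 0)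
    (h : u ≠ 0) : Counts u := by
  by_cases h1 : u 0 ≠ 0 ∨ u 1 ≠ 0 ∨ u 2 ≠ 0
  · exact counts_low u hu h1
  by_cases h2 : u 4 ≠ 0 ∨ u 5 ≠ 0 ∨ u 6 ≠ 0
  · exact counts_swap _ (counts_low _ (by rw [quadForm_swap, hu]) h2)
  · exfalso
    push Not at h1 h2
    obtain ⟨a, b, c⟩ := h1
    obtain ⟨d, e, f⟩ := h2
    have g : u 3 = 0 := by
      simpa [quadForm, a, b, c] using hu
    apply h
    funext i
    fin_cases i <;> assumption

/-- Pairs of vectors spanning a moving line. -/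
def MovingPair {F : Type} [Field F] (u v : Fin 7 → F) : Prop :=
  quadForm u = 0 ∧ (quadForm v = 0 ∧ polarB u v = 0) ∧ ¬ HexEq u v

theorem card_movingPair_fiber {F : Type} [Field F] [Fintype F] (u : Fin 7 → F)
    (hu : quadForm u = 0) (h : u ≠ 0) :
    Nat.card {v // MovingPair u v} = Nat.card F ^ 5 - Nat.card F ^ 3 := by
  obtain ⟨h1, h2⟩ := counts_all u hu h
  rw [card_split _ (fun v => HexEq u v), h2] at h1
  rw [← h1, Nat.add_sub_cancel_left]
  simp [MovingPair, hu]

theorem card_movingPair {F : Type} [Field F] [Fintype F] :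
    Nat.card {p : (Fin 7 → F) × (Fin 7 → F) // MovingPair p.1 p.2} =
      (Nat.card F ^ 6 - 1) * (Nat.card F ^ 5 - Nat.card F ^ 3) := by
  classical
  have e : {p : (Fin 7 → F) × (Fin 7 → F) // MovingPair p.1 p.2} ≃
      Σ u : {x : Fin 7 → F // quadForm x = 0 ∧ x ≠ 0}, {v // MovingPair u.1 v} :=
    { toFun := fun p => ⟨⟨p.1.1, p.2.1, by
        intro h0
        apply p.2.2.2
        rw [h0]
        simp [HexEq, grass]⟩, ⟨p.1.2, p.2⟩⟩
      invFun := fun p => ⟨(p.1.1, p.2.1), p.2.2⟩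
      left_inv := fun p => rfl
      right_inv := fun p => rfl }
  rw [Nat.card_congr e, Nat.card_sigma,
    Finset.sum_congr rfl (fun u _ => card_movingPair_fiber u.1 u.2.1 u.2.2)]
  rw [Finset.sum_const, smul_eq_mul]
  congr 1
  have h := card_quadric (F := F)
  rw [card_split _ (fun x => x = 0)] at h
  have h1 : Nat.card {x : Fin 7 → F // quadForm x = 0 ∧ x = 0} = 1 := by
    rw [Nat.card_eq_one_iff_unique]
    refine ⟨⟨fun a b => Subtype.ext (a.2.2.trans b.2.2.symm)⟩, ⟨0, by simp [quadForm], rfl⟩⟩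
  rw [h1] at h
  rw [Finset.card_univ, ← Nat.card_eq_fintype_card]
  simp only [ne_eq]
  omega

theorem movingPair_indep {F : Type} [Field F] (u v : Fin 7 → F) (h : MovingPair u v) :
    LinearIndependent F ![u, v] := by
  rw [LinearIndependent.pair_iff]
  intro s t hst
  by_contra hne
  apply h.2.2
  have hc : ∀ i, s * u i + t * v i = 0 := fun i => by simpa using congrFun hst i
  have hg : ∀ i j, grass u v i j = 0 := by
    intro i j
    have hs : s * grass u v i j = 0 := by
      simp only [grass]; linear_combination v j * hc i - v i * hc j
    have ht : t * grass u v i j = 0 := by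
      simp only [grass]; linear_combination u i * hc j - u j * hc i
    by_contra hg
    exact hne ⟨(mul_eq_zero.mp hs).resolve_right hg, (mul_eq_zero.mp ht).resolve_right hg⟩
  simp [HexEq, hg]

theorem movingLine_span {F : Type} [Field F] (u v : Fin 7 → F) (h : MovingPair u v) :
    MovingLine (Submodule.span F {u, v}) := by
  refine ⟨⟨?_, ?_⟩, ?_⟩
  · have := finrank_span_eq_card (movingPair_indep u v h)
    have hr : Set.range ![u, v] = {u, v} := by
      ext x
      simp [eq_comm, or_comm]
    rw [hr] at this
    simpa using this
  · intro x hx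
    obtain ⟨a, b, rfl⟩ := Submodule.mem_span_pair.mp hx
    rw [quadForm_comb, h.1, h.2.1.1, h.2.1.2]
    simp
  · intro hs
    exact h.2.2 (hs u (Submodule.subset_span (by simp)) v (Submodule.subset_span (by simp)))

theorem span_eq_of_indep {F : Type} [Field F] (W : Submodule F (Fin 7 → F))
    (hW : Module.finrank F W = 2) (s : Fin 2 → W) (hs : LinearIndependent F s) :
    Submodule.span F {(s 0 : Fin 7 → F), (s 1 : Fin 7 → F)} = W := by
  apply Submodule.eq_of_le_of_finrank_eq
  · rw [Submodule.span_le]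
    rintro x (rfl | rfl)
    · exact (s 0).2
    · exact (s 1).2
  · have h2 : LinearIndependent F (fun i => (s i : Fin 7 → F)) :=
      hs.map' W.subtype (Submodule.ker_subtype W)
    have := finrank_span_eq_card h2
    rw [hW]
    have hr : Set.range (fun i => (s i : Fin 7 → F)) = {(s 0 : Fin 7 → F), (s 1 : Fin 7 → F)} := by
      ext x
      simp [Fin.exists_fin_two, eq_comm]
    rw [hr] at this
    simpa using this

theorem movingPair_of_indep {F : Type} [Field F] (W : Submodule F (Fin 7 → F))
    (hW : MovingLine W) (s : Fin 2 → W) (hs : LinearIndependent F s) :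
    MovingPair (s 0 : Fin 7 → F) (s 1 : Fin 7 → F) := by
  have hsp := span_eq_of_indep W hW.1.1 s hs
  have h0 := hW.1.2 _ (s 0).2
  have h1 := hW.1.2 _ (s 1).2
  refine ⟨h0, ⟨h1, ?_⟩, ?_⟩
  · have := hW.1.2 _ (W.add_mem (W.smul_mem 1 (s 0).2) (W.smul_mem 1 (s 1).2))
    rw [quadForm_comb, h0, h1] at this
    simpa using this
  · intro hx
    apply hW.2
    intro x hx' y hy'
    rw [← hsp] at hx' hy'
    obtain ⟨a, b, rfl⟩ := Submodule.mem_span_pair.mp hx'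
    obtain ⟨c, d, rfl⟩ := Submodule.mem_span_pair.mp hy'
    exact hexEq_comb _ _ _ _ _ _ hx

/-- Pairing of bases of moving lines with moving pairs. -/
def basisToPair {F : Type} [Field F]
    (x : Σ W : {W : Submodule F (Fin 7 → F) // MovingLine W},
      {s : Fin 2 → W.1 // LinearIndependent F s}) :
    {p : (Fin 7 → F) × (Fin 7 → F) // MovingPair p.1 p.2} :=
  ⟨((x.2.1 0 : Fin 7 → F), (x.2.1 1 : Fin 7 → F)),
    movingPair_of_indep x.1.1 x.1.2 x.2.1 x.2.2⟩

theorem basisToPair_bijective {F : Type} [Field F] :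
    Function.Bijective (basisToPair (F := F)) := by
  constructor
  · rintro ⟨⟨W, hW⟩, ⟨s, hs⟩⟩ ⟨⟨W', hW'⟩, ⟨s', hs'⟩⟩ h
    simp only [basisToPair, Subtype.mk.injEq, Prod.mk.injEq] at h
    have e : W = W' := by
      rw [← span_eq_of_indep W hW.1.1 s hs, ← span_eq_of_indep W' hW'.1.1 s' hs', h.1, h.2]
    subst e
    have : s = s' := by
      funext i
      apply Subtype.ext
      fin_cases i
      · exact h.1
      · exact h.2
    subst this
    rfl
  · rintro ⟨⟨u, v⟩, h⟩
    have hu : u ∈ Submodule.span F {u, v} := Submodule.subset_span (by simp)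
    have hv : v ∈ Submodule.span F {u, v} := Submodule.subset_span (by simp)
    refine ⟨⟨⟨Submodule.span F {u, v}, movingLine_span u v h⟩, ⟨![⟨u, hu⟩, ⟨v, hv⟩], ?_⟩⟩, rfl⟩
    apply LinearIndependent.of_comp (Submodule.subtype _)
    convert movingPair_indep u v h using 1
    funext i
    fin_cases i <;> rfl

theorem card_lines_mul {F : Type} [Field F] [Fintype F] :
    Nat.card {W : Submodule F (Fin 7 → F) // MovingLine W} *
      ((Nat.card F ^ 2 - 1) * (Nat.card F ^ 2 - Nat.card F)) =
      (Nat.card F ^ 6 - 1) * (Nat.card F ^ 5 - Nat.card F ^ 3) := by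
  classical
  rw [← card_movingPair, ← Nat.card_congr (Equiv.ofBijective _ (basisToPair_bijective (F := F)))]
  haveI : Finite (Submodule F (Fin 7 → F)) :=
    Finite.of_injective (fun W => (W : Set (Fin 7 → F))) SetLike.coe_injective
  haveI := Fintype.ofFinite {W : Submodule F (Fin 7 → F) // MovingLine W}
  rw [Nat.card_sigma, Finset.sum_congr rfl (g := fun _ =>
    (Nat.card F ^ 2 - 1) * (Nat.card F ^ 2 - Nat.card F))]
  · rw [Finset.sum_const, smul_eq_mul, Finset.card_univ, ← Nat.card_eq_fintype_card]
  · intro W _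
    have hf := W.2.1.1
    have := card_linearIndependent (K := F) (V := W.1) (k := 2) (by rw [hf])
    rw [this, hf]
    simp [Fin.prod_univ_two, Nat.card_eq_fintype_card]

/-- Over a finite field with `q` elements, the number of moving lines of the
quadratic form `Q(x) = x₀x₄ + x₁x₅ + x₂x₆ − x₃²` on `F⁷` equals `(q⁴+q²+1)(q+1)q²`. -/
theorem stmt_9 (q : ℕ) (F : Type) [Field F] [Fintype F] (hq : Fintype.card F = q) :
    {W : Submodule F (Fin 7 → F) | MovingLine W}.ncard =
      (q ^ 4 + q ^ 2 + 1) * (q + 1) * q ^ 2 := by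
  have h := card_lines_mul (F := F)
  have h1 : 1 < q := hq ▸ Fintype.one_lt_card
  rw [Nat.card_eq_fintype_card (α := F), hq] at h
  change Nat.card {W : Submodule F (Fin 7 → F) // MovingLine W} = _
  have h2 : q < q ^ 2 := by nlinarith
  have h3 : 0 < (q ^ 2 - 1) * (q ^ 2 - q) := Nat.mul_pos (by omega) (by omega)
  apply Nat.eq_of_mul_eq_mul_right h3
  rw [h]
  have h6 : 1 ≤ q ^ 6 := Nat.one_le_pow _ _ (by omega)
  have h5 : q ^ 3 ≤ q ^ 5 := Nat.pow_le_pow_right (by omega) (by omega)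
  have h4 : 1 ≤ q ^ 2 := Nat.one_le_pow _ _ (by omega)
  zify [h6, h5, h4, h2.le]
  ring
end
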